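/- In the many-to-one LTU matching model, if (μ*, u*) is stable then against the strategy p*_a = Φ_a μ*_a/(Φᵀμ*), player 2 is indifferent among all mixed strategies: π(p*, q) = 1/(Φᵀμ*) for every probability distribution q on X. In particular, q*_x = n_x u*_x/(nᵀu*) is a best response to p*, and (p*, q*) is a Nash equilibrium of the N-dimensional hide-and-seek game. -/

import Mathlib

/-!
Stability says exactly that both players' expected payoffs equalize. For player 2, in `π p* δ_x` the
factor `Φ a` of `p*` cancels the one in the payoff, leaving `(∑ a, M x a * μ a) / (n x * Φᵀμ)`,
which is `1 / Φᵀμ` by feasibility; linearity in `q` gives the value at every mixed strategy.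
For player 1, averaging the loss of a pure strategy `a` over `q*` gives
`(∑ i, λ i a * u (x i)) / (nᵀu * Φ a)` (`sum_qstar_loss`), which by stability is at least `1 / nᵀu`,
with equality on the support of `p*`. Singleton arrangements force `u > 0` (`payoff_pos`), so that
`q*` is a genuine probability distribution.
-/

/-- The expected loss, against `q*`, of playing the arrangement with weights `l`, members `m` and
output `c`: the masses `n x` cancel and the weighted sum of payoffs of the arrangement remains.
The normalizer `U` is arbitrary. -/
lemma sum_qstar_loss {X : Type*} [Fintype X] [DecidableEq X] {N : ℕ}
    (m : Fin N → Option X) (l : Fin N → ℝ) (c U : ℝ) (n u : X → ℝ) (hn : ∀ x, 0 < n x) :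
    ∑ x, n x * u x / U * ((∑ i, if m i = some x then l i else 0) / (n x * c)) =
      (∑ i, l i * (m i).elim 0 u) / (U * c) := by
  have hcancel : ∀ x, n x * u x / U * ((∑ i, if m i = some x then l i else 0) / (n x * c)) =
      (∑ i, if m i = some x then l i * u x else 0) / (U * c) := by
    intro x
    rw [div_mul_div_comm, show U * (n x * c) = n x * (U * c) by ring, mul_assoc,
      mul_div_mul_left _ _ (hn x).ne', Finset.mul_sum]
    congr 1
    refine Finset.sum_congr rfl fun i _ => ?_
    split_ifs <;> ring
  rw [Finset.sum_congr rfl fun x _ => hcancel x, ← Finset.sum_div, Finset.sum_comm]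
  congr 1
  refine Finset.sum_congr rfl fun i _ => ?_
  cases m i <;> simp

/-- An agent who can form an arrangement alone carries its full weight there, so stability bounds
the agent's payoff below by the (positive) output of that arrangement. -/
lemma payoff_pos {X : Type*} {N : ℕ} (m : Fin N → Option X) (l : Fin N → ℝ) (c : ℝ) (u : X → ℝ)
    (x : X) (i : Fin N) (hc : 0 < c) (hl : ∑ j, l j = 1) (hl0 : ∀ j, l j = 0 ↔ m j = none)
    (hi : m i = some x) (hj : ∀ j, j ≠ i → m j = none)
    (hs : ∑ j, l j * (m j).elim 0 u ≥ c) : 0 < u x := by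
  rw [Fintype.sum_eq_single i fun j h => (hl0 j).2 (hj j h)] at hl
  rw [Fintype.sum_eq_single i fun j h => by simp [(hl0 j).2 (hj j h)], hl, hi] at hs
  simp only [Option.elim_some, one_mul] at hs
  linarith


/-- In the many-to-one LTU model, against p* player 2 is
indifferent among all mixed strategies: π(p*, q) = 1/(Φᵀμ*) for every q.
In particular q* is a best response to p*, and (p*, q*) is a Nash equilibrium
of the N-dimensional hide-and-seek game. -/
theorem many_to_one_player2_indifferent_and_nash
    {X : Type*} [Fintype X] [DecidableEq X] [Nonempty X]
    {N : ℕ} {A : Type*} [Fintype A]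
    (memb : A → Fin N → Option X)
    (lam : A → Fin N → ℝ) (Φ : A → ℝ) (n : X → ℝ)
    (μ : A → ℝ) (u : X → ℝ)
    (hn : ∀ x, 0 < n x) (hΦ : ∀ a, 0 < Φ a)
    (hlam0 : ∀ a i, 0 ≤ lam a i)
    (hlam1 : ∀ a, ∑ i, lam a i = 1)
    (hlamnone : ∀ a i, lam a i = 0 ↔ memb a i = none)
    (hne : ∀ a : A, ∃ i, memb a i ≠ none)
    (hsingle : ∀ x : X, ∃ a : A, ∃ i, memb a i = some x ∧ ∀ j, j ≠ i → memb a j = none)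
    -- stability of (μ, u)
    (hμ0 : ∀ a, 0 ≤ μ a)
    (hfeas : ∀ x, ∑ a, ((Finset.univ.filter fun i => memb a i = some x).card : ℝ) * μ a = n x)
    (hstab1 : ∀ a, ∑ i, lam a i * (memb a i).elim 0 u ≥ Φ a)
    (hstab2 : ∀ a, 0 < μ a → ∑ i, lam a i * (memb a i).elim 0 u = Φ a)
    -- expected loss of player 1 and payoff of player 2
    (ℓ π : (A → ℝ) → (X → ℝ) → ℝ)
    (hℓ : ∀ p q, ℓ p q = ∑ a, p a * ∑ x, q x *
      ((∑ i, if memb a i = some x then lam a i else 0) / (n x * Φ a)))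
    (hπ : ∀ p q, π p q = ∑ a, p a * ∑ x, q x *
      (((Finset.univ.filter fun i => memb a i = some x).card : ℝ) / (n x * Φ a)))
    -- the strategies p*, q*
    (pstar : A → ℝ) (qstar : X → ℝ)
    (hp : ∀ a, pstar a = Φ a * μ a / ∑ a', Φ a' * μ a')
    (hq : ∀ x, qstar x = n x * u x / ∑ x', n x' * u x') :
    (∀ q : X → ℝ, (∀ x, 0 ≤ q x) → (∑ x, q x) = 1 →
      π pstar q = 1 / ∑ a, Φ a * μ a) ∧
    (∀ q : X → ℝ, (∀ x, 0 ≤ q x) → (∑ x, q x) = 1 →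
      π pstar qstar ≥ π pstar q) ∧
    (∀ p : A → ℝ, (∀ a, 0 ≤ p a) → (∑ a, p a) = 1 →
      ℓ pstar qstar ≤ ℓ p qstar) := by
  set S := ∑ a, Φ a * μ a with hS
  set U := ∑ x, n x * u x with hU
  have hu : ∀ x, 0 < u x := by
    intro x
    obtain ⟨a, i, hi, hj⟩ := hsingle x
    exact payoff_pos (memb a) (lam a) (Φ a) u x i (hΦ a) (hlam1 a) (hlamnone a) hi hj (hstab1 a)
  have hUpos : 0 < U :=
    Finset.sum_pos (fun x _ => mul_pos (hn x) (hu x)) Finset.univ_nonempty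
  have hSpos : 0 < S := by
    -- Otherwise `μ = 0`, against feasibility, since `n x > 0`.
    have hS0 : ∀ a ∈ Finset.univ, 0 ≤ Φ a * μ a := fun a _ => mul_nonneg (hΦ a).le (hμ0 a)
    refine lt_of_le_of_ne (Finset.sum_nonneg hS0) fun h => ?_
    have hz := (Finset.sum_eq_zero_iff_of_nonneg hS0).1 h.symm
    have hμz : ∀ a, μ a = 0 := fun a =>
      (mul_eq_zero.1 (hz a (Finset.mem_univ a))).resolve_left (hΦ a).ne'
    obtain ⟨x⟩ := ‹Nonempty X›
    have hx := hfeas x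
    simp only [hμz, mul_zero, Finset.sum_const_zero] at hx
    exact (hn x).ne hx
  have hindiff : ∀ q : X → ℝ, (∑ x, q x) = 1 → π pstar q = 1 / S := by
    intro q hq1
    have hpure : ∀ x, ∑ a, pstar a * (q x *
        (((Finset.univ.filter fun i => memb a i = some x).card : ℝ) / (n x * Φ a))) =
        q x * (1 / S) := by
      intro x
      have hterm : ∀ a, pstar a * (q x *
          (((Finset.univ.filter fun i => memb a i = some x).card : ℝ) / (n x * Φ a))) =
          q x / (S * n x) *
            (((Finset.univ.filter fun i => memb a i = some x).card : ℝ) * μ a) := by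
        intro a
        rw [hp]
        have h1 := (hn x).ne'
        have h2 := (hΦ a).ne'
        have h3 := hSpos.ne'
        field_simp
      rw [Finset.sum_congr rfl fun a _ => hterm a, ← Finset.mul_sum, hfeas]
      have h1 := (hn x).ne'
      have h3 := hSpos.ne'
      field_simp
    rw [hπ]
    simp only [Finset.mul_sum]
    rw [Finset.sum_comm]
    rw [Finset.sum_congr rfl fun x _ => hpure x, ← Finset.sum_mul, hq1, one_mul]
  have hqsum : ∑ x, qstar x = 1 := by
    simp only [hq]
    rw [← Finset.sum_div]
    exact div_self hUpos.ne'
  have hpsum : ∑ a, pstar a = 1 := by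
    simp only [hp]
    rw [← Finset.sum_div]
    exact div_self hSpos.ne'
  have hloss : ∀ p, ℓ p qstar =
      ∑ a, p a * ((∑ i, lam a i * (memb a i).elim 0 u) / (U * Φ a)) := by
    intro p
    rw [hℓ]
    refine Finset.sum_congr rfl fun a _ => ?_
    simp only [hq]
    rw [sum_qstar_loss (memb a) (lam a) (Φ a) U n u hn]
  refine ⟨fun q _ h => hindiff q h, fun q _ h => ?_, fun p hp0 hp1 => ?_⟩
  · rw [hindiff q h, hindiff qstar hqsum]
  · -- Both sides are compared with the value `1 / U`.
    have hval : ℓ pstar qstar = 1 / U := by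
      have hterm : ∀ a, pstar a * ((∑ i, lam a i * (memb a i).elim 0 u) / (U * Φ a)) =
          pstar a * (1 / U) := by
        intro a
        rcases (hμ0 a).eq_or_lt with h | h
        · simp [hp, ← h]
        · rw [hstab2 a h, div_mul_cancel_right₀ (hΦ a).ne', one_div]
      rw [hloss, Finset.sum_congr rfl fun a _ => hterm a, ← Finset.sum_mul, hpsum, one_mul]
    have hbound : ∑ a, p a * (1 / U) ≤ ℓ p qstar := by
      rw [hloss]
      refine Finset.sum_le_sum fun a _ => mul_le_mul_of_nonneg_left ?_ (hp0 a)
      rw [div_le_div_iff₀ hUpos (mul_pos hUpos (hΦ a)), one_mul, mul_comm U]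
      exact mul_le_mul_of_nonneg_right (hstab1 a) hUpos.le
    rw [← Finset.sum_mul, hp1, one_mul] at hbound
    exact hval.trans_le hbound
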